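/- Let k ≥ 1, β ∈ (0, min(2,k)), and S(t,x) the heat kernel on ℝ^k. There exists a constant C > 0 such that for all s ≥ 0 and x, y ∈ ℝ^k, ∫_0^s dr ∫_{ℝ^k} dz ∫_{ℝ^k} dv ‖z-v‖^{-β} |S(r, x-z) - S(r, y-z)| · |S(r, x-v) - S(r, y-v)| ≤ C ‖x - y‖^{2-β}. -/

import Mathlib

open Real MeasureTheory

noncomputable def heatKernel (k : ℕ) (t : ℝ) (x : EuclideanSpace ℝ (Fin k)) : ℝ :=
  (2 * Real.pi * t) ^ (-(k : ℝ) / 2) * Real.exp (-‖x‖ ^ 2 / (2 * t))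

noncomputable def auxG (k : ℕ) (t : ℝ) (x : EuclideanSpace ℝ (Fin k)) : ℝ :=
  (2 * Real.pi * t) ^ (-(k : ℝ) / 2) * Real.exp (-‖x‖ ^ 2 / (4 * t))

noncomputable def auxP (k : ℕ) (β R : ℝ) (x : EuclideanSpace ℝ (Fin k)) : ℝ :=
  (Metric.ball 0 R).indicator (fun u : EuclideanSpace ℝ (Fin k) => ‖u‖ ^ (-β)) x

lemma auxP_nonneg (k : ℕ) (β R : ℝ) (x : EuclideanSpace ℝ (Fin k)) : 0 ≤ auxP k β R x :=
  Set.indicator_nonneg (fun _ _ => by positivity) _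

lemma auxG_nonneg (k : ℕ) {t : ℝ} (ht : 0 < t) (x : EuclideanSpace ℝ (Fin k)) :
    0 ≤ auxG k t x := by
  unfold auxG; positivity

lemma auxP_integrable (k : ℕ) (hk : 1 ≤ k) (β R : ℝ) (hR : 0 < R) (hβ : β < k) :
    Integrable (auxP k β R) := by
  have : Nonempty (Fin k) := ⟨⟨0, hk⟩⟩
  have : Nontrivial (EuclideanSpace ℝ (Fin k)) := inferInstance
  have : IntegrableOn (fun u : EuclideanSpace ℝ (Fin k) => ‖u‖ ^ (-β)) (Metric.ball 0 R) := by
    rw [integrableOn_fun_norm_addHaar volume (f := fun y : ℝ => y ^ (-β))]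
    have h := (intervalIntegral.integrableOn_Ioo_rpow_iff (s := (k:ℝ) - 1 - β) hR).2 (by linarith)
    refine h.congr_fun (fun y hy => ?_) measurableSet_Ioo
    have hy0 : 0 < y := hy.1
    simp only [finrank_euclideanSpace, Fintype.card_fin, smul_eq_mul]
    rw [← Real.rpow_natCast, ← Real.rpow_add hy0, Nat.cast_sub hk]
    congr 1
    push_cast; ring
  exact this.integrable_indicator Metric.isOpen_ball.measurableSet

lemma auxP_integral (k : ℕ) (β R : ℝ) (hR : 0 < R) :
    ∫ u, auxP k β R u = R ^ ((k:ℝ) - β) * ∫ u, auxP k β 1 u := by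
  have h := Measure.integral_comp_smul_of_nonneg (volume : Measure (EuclideanSpace ℝ (Fin k)))
    (auxP k β R) R (hR := hR.le)
  have h2 : ∀ u, auxP k β R (R • u) = R ^ (-β) * auxP k β 1 u := by
    intro u
    have : ‖R • u‖ = R * ‖u‖ := by rw [norm_smul, Real.norm_of_nonneg hR.le]
    unfold auxP
    by_cases hu : ‖u‖ < 1
    · rw [Set.indicator_of_mem, Set.indicator_of_mem, this, Real.mul_rpow hR.le (norm_nonneg _)]
      · simpa using hu
      · simp only [Metric.mem_ball, dist_zero_right, this]; nlinarith
    · rw [Set.indicator_of_notMem, Set.indicator_of_notMem, mul_zero]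
      · simpa using hu
      · simp only [Metric.mem_ball, dist_zero_right, this]; nlinarith
  simp only [h2, integral_const_mul, finrank_euclideanSpace, Fintype.card_fin, smul_eq_mul] at h
  rw [sub_eq_add_neg, Real.rpow_add hR, mul_assoc, h, Real.rpow_natCast]
  field_simp

lemma auxG_int (k : ℕ) {t : ℝ} (ht : 0 < t) :
    Integrable (auxG k t) ∧ ∫ u, auxG k t u = 2 ^ ((k:ℝ) / 2) := by
  have h := GaussianFourier.integral_rexp_neg_mul_sq_norm (V := EuclideanSpace ℝ (Fin k))
    (b := 1 / (4 * t)) (by positivity)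
  have e : ∀ u : EuclideanSpace ℝ (Fin k), auxG k t u =
      (2 * Real.pi * t) ^ (-(k : ℝ) / 2) * Real.exp (-(1 / (4 * t)) * ‖u‖ ^ 2) := by
    intro u; unfold auxG; congr 2; ring
  have h2 : ∫ u, auxG k t u = 2 ^ ((k:ℝ) / 2) := by
    simp only [e, integral_const_mul, h, finrank_euclideanSpace, Fintype.card_fin]
    rw [show π / (1 / (4 * t)) = 2 * (2 * π * t) by field_simp; norm_num1,
      neg_div, Real.rpow_neg (by positivity)]
    have hpos : 0 < 2 * π * t := by positivity
    generalize 2 * π * t = w at *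
    rw [Real.mul_rpow (by norm_num) hpos.le]
    have : w ^ ((k:ℝ)/2) ≠ 0 := by positivity
    field_simp
  exact ⟨.of_integral_ne_zero (by rw [h2]; positivity), h2⟩

lemma aux_lip (a b : ℝ) : |Real.exp (-a ^ 2 / 4) - Real.exp (-b ^ 2 / 4)| ≤ |a - b| := by
  have := Convex.norm_image_sub_le_of_norm_hasDerivWithin_le (s := Set.univ) (C := 1)
    (f := fun c : ℝ => Real.exp (-c ^ 2 / 4))
    (f' := fun c : ℝ => Real.exp (-c ^ 2 / 4) * (-(2 * c) / 4)) (x := b) (y := a)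
    (fun c _ => by
      have : HasDerivAt (fun c : ℝ => -c ^ 2 / 4) (-(2 * c) / 4) c := by
        simpa using ((hasDerivAt_pow 2 c).neg.div_const 4)
      exact this.exp.hasDerivWithinAt)
    (fun c _ => by
      rw [Real.norm_eq_abs, abs_mul, abs_of_pos (Real.exp_pos _)]
      have h1 : |-(2 * c) / 4| ≤ Real.exp (c ^ 2 / 4) := by
        have := Real.add_one_le_exp (c ^ 2 / 4)
        rw [abs_le]; constructor <;> nlinarith [sq_nonneg (c - 1), sq_nonneg (c + 1)]
      calc _ ≤ Real.exp (-c ^ 2 / 4) * Real.exp (c ^ 2 / 4) := by gcongr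
        _ = 1 := by rw [← Real.exp_add]; ring_nf; simp)
    convex_univ (Set.mem_univ _) (Set.mem_univ _)
  simpa using this

lemma aux_diff (a b : ℝ) : |Real.exp (-a ^ 2 / 2) - Real.exp (-b ^ 2 / 2)| ≤
    min 1 |a - b| * (Real.exp (-a ^ 2 / 4) + Real.exp (-b ^ 2 / 4)) := by
  have e : ∀ a : ℝ, Real.exp (-a ^ 2 / 2) = Real.exp (-a ^ 2 / 4) * Real.exp (-a ^ 2 / 4) := by
    intro a; rw [← Real.exp_add]; ring_nf
  have h1 : ∀ a : ℝ, Real.exp (-a ^ 2 / 4) ≤ 1 := by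
    intro a; rw [Real.exp_le_one_iff]; nlinarith [sq_nonneg a]
  rw [e, e, mul_self_sub_mul_self, abs_mul, abs_of_pos (by positivity), mul_comm]
  gcongr
  refine le_min ?_ (aux_lip a b)
  rw [abs_le]
  constructor <;> linarith [h1 a, h1 b, Real.exp_pos (-a ^ 2 / 4), Real.exp_pos (-b ^ 2 / 4)]

lemma aux_heat (k : ℕ) {r : ℝ} (hr : 0 < r) (x y v : EuclideanSpace ℝ (Fin k)) :
    |heatKernel k r (x - v) - heatKernel k r (y - v)| ≤
      min 1 (‖x - y‖ / √r) * (auxG k r (x - v) + auxG k r (y - v)) := by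
  have hs : 0 < √r := Real.sqrt_pos.2 hr
  have hsq : √r ^ 2 = r := Real.sq_sqrt hr.le
  have h := aux_diff (‖x - v‖ / √r) (‖y - v‖ / √r)
  have e : ∀ a c : ℝ, -(a / √r) ^ 2 / c = -a ^ 2 / (c * r) := by
    intro a c; rw [div_pow, hsq, ← neg_div, div_div, mul_comm]
  simp only [e] at h
  have h3 : |‖x - v‖ / √r - ‖y - v‖ / √r| ≤ ‖x - y‖ / √r := by
    rw [← sub_div, abs_div, abs_of_pos hs]
    gcongr
    simpa using abs_norm_sub_norm_le (x - v) (y - v)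
  unfold heatKernel auxG
  rw [← mul_sub, ← mul_add, abs_mul, abs_of_nonneg (by positivity), mul_left_comm]
  gcongr
  exact h.trans (by gcongr)

lemma aux_kernel (k : ℕ) {β r : ℝ} (hβ : 0 < β) (hr : 0 < r) (x z v : EuclideanSpace ℝ (Fin k)) :
    ‖z - v‖ ^ (-β) * auxG k r (x - v) ≤ r ^ (-β / 2) * auxG k r (x - v) +
      (2 * Real.pi * r) ^ (-(k : ℝ) / 2) * auxP k β √r (z - v) := by
  have hG := auxG_nonneg k hr (x - v)
  have hs : 0 < √r := Real.sqrt_pos.2 hr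
  by_cases h : ‖z - v‖ < √r
  · have hp : auxP k β √r (z - v) = ‖z - v‖ ^ (-β) := by
      unfold auxP; rw [Set.indicator_of_mem]; simpa using h
    have : auxG k r (x - v) ≤ (2 * Real.pi * r) ^ (-(k : ℝ) / 2) := by
      unfold auxG
      refine mul_le_of_le_one_right (by positivity) ?_
      rw [Real.exp_le_one_iff, neg_div, neg_nonpos]; positivity
    have h2 : 0 ≤ r ^ (-β / 2) * auxG k r (x - v) := by positivity
    rw [hp, mul_comm]
    have := mul_le_mul_of_nonneg_right this (by positivity : 0 ≤ ‖z - v‖ ^ (-β))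
    linarith
  · push Not at h
    have h2 := auxP_nonneg k β √r (z - v)
    have : ‖z - v‖ ^ (-β) ≤ r ^ (-β / 2) := by
      calc _ ≤ √r ^ (-β) := Real.rpow_le_rpow_of_nonpos hs h (by linarith)
        _ = _ := by rw [Real.sqrt_eq_rpow, ← Real.rpow_mul hr.le]; congr 1; ring
    have h3 := mul_le_mul_of_nonneg_right this hG
    have : 0 ≤ (2 * Real.pi * r) ^ (-(k : ℝ) / 2) * auxP k β √r (z - v) := by positivity
    linarith

lemma aux_inner (k : ℕ) (hk : 1 ≤ k) (β : ℝ) (hβ : 0 < β) (hβ2 : β < k) :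
    ∃ A : ℝ, 0 < A ∧ ∀ r : ℝ, 0 < r → ∀ x y : EuclideanSpace ℝ (Fin k),
      (∫ z : EuclideanSpace ℝ (Fin k), ∫ v : EuclideanSpace ℝ (Fin k),
              ‖z - v‖ ^ (-β) * |heatKernel k r (x - z) - heatKernel k r (y - z)| *
                |heatKernel k r (x - v) - heatKernel k r (y - v)|) ≤
      A * (r ^ (-β / 2) * min 1 (‖x - y‖ / √r) ^ 2) := by
  set B := ∫ u, auxP k β 1 u with hB
  have hB0 : 0 ≤ B := integral_nonneg (auxP_nonneg k β 1)
  set a : ℝ := 2 ^ ((k:ℝ) / 2) with ha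
  have ha0 : 0 < a := by positivity
  set c : ℝ := (2 * Real.pi) ^ (-(k : ℝ) / 2) with hc
  have hc0 : 0 < c := by positivity
  refine ⟨(2 * (a + c * B)) * (2 * a), by positivity, fun r hr x y => ?_⟩
  set m := min 1 (‖x - y‖ / √r) with hm
  have hm0 : 0 ≤ m := by positivity
  set D := fun v => |heatKernel k r (x - v) - heatKernel k r (y - v)| with hD
  have hD0 : ∀ v, 0 ≤ D v := fun v => abs_nonneg _
  have hDle : ∀ v, D v ≤ m * (auxG k r (x - v) + auxG k r (y - v)) := aux_heat k hr x y
  obtain ⟨hGi, hGv⟩ := auxG_int k hr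
  have hs : 0 < √r := Real.sqrt_pos.2 hr
  have hPi := auxP_integrable k hk β √r hs hβ2
  have hPv : (2 * Real.pi * r) ^ (-(k : ℝ) / 2) * ∫ u, auxP k β √r u = r ^ (-β / 2) * (c * B) := by
    rw [auxP_integral k β √r hs, Real.mul_rpow (by positivity) hr.le, ← hB, ← hc,
      Real.sqrt_eq_rpow, ← Real.rpow_mul hr.le,
      show -β / 2 = -(k:ℝ)/2 + 1 / 2 * (k - β) by ring, Real.rpow_add hr]
    ring
  have iG : ∀ x, Integrable (fun v => auxG k r (x - v)) := fun x => hGi.comp_sub_left x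
  have iP : ∀ z, Integrable (fun v => auxP k β √r (z - v)) := fun x => hPi.comp_sub_left x
  have vG : ∀ x, ∫ v, auxG k r (x - v) = a := fun x => by
    rw [integral_sub_left_eq_self (auxG k r) volume x, hGv]
  have vP : ∀ z, ∫ v, auxP k β √r (z - v) = ∫ u, auxP k β √r u := fun x =>
    integral_sub_left_eq_self (auxP k β √r) volume x
  set q : ℝ := (2 * Real.pi * r) ^ (-(k : ℝ) / 2) with hq
  have key : ∀ z, (∫ v, ‖z - v‖ ^ (-β) * D z * D v) ≤
      D z * (m * (2 * (r ^ (-β / 2) * (a + c * B)))) := by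
    intro z
    set g : EuclideanSpace ℝ (Fin k) → ℝ := fun v => D z * (m *
      ((r ^ (-β / 2) * auxG k r (x - v) + q * auxP k β √r (z - v)) +
       (r ^ (-β / 2) * auxG k r (y - v) + q * auxP k β √r (z - v)))) with hg
    have i1 : ∀ x, Integrable (fun v => r ^ (-β / 2) * auxG k r (x - v) +
        q * auxP k β √r (z - v)) := fun x => ((iG x).const_mul _).add ((iP z).const_mul _)
    have v1 : ∀ x, ∫ v, (r ^ (-β / 2) * auxG k r (x - v) +
        q * auxP k β √r (z - v)) = r ^ (-β / 2) * (a + c * B) := fun x => by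
      rw [integral_add ((iG x).const_mul _) ((iP z).const_mul _), integral_const_mul,
        integral_const_mul, vG, vP, hPv]; ring
    have ig : Integrable g := (((i1 x).add (i1 y)).const_mul _).const_mul _
    have vg : ∫ v, g v = D z * (m * (2 * (r ^ (-β / 2) * (a + c * B)))) := by
      rw [hg, integral_const_mul, integral_const_mul, integral_add (i1 x) (i1 y), v1, v1]; ring
    rw [← vg]
    refine integral_mono_of_nonneg (.of_forall fun v => ?_) ig (.of_forall fun v => ?_)
    · have := hD0 v; have := hD0 z
      simp only [Pi.zero_apply]; positivity
    · have h1 := aux_kernel k hβ hr x z v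
      have h2 := aux_kernel k hβ hr y z v
      have := hD0 z
      calc ‖z - v‖ ^ (-β) * D z * D v ≤ ‖z - v‖ ^ (-β) * D z *
            (m * (auxG k r (x - v) + auxG k r (y - v))) := by gcongr; exact hDle v
        _ = D z * (m * (‖z - v‖ ^ (-β) * auxG k r (x - v) +
            ‖z - v‖ ^ (-β) * auxG k r (y - v))) := by ring
        _ ≤ g v := by simp only [hg]; gcongr
  set M := m * (2 * (r ^ (-β / 2) * (a + c * B))) with hM
  have hM0 : 0 ≤ M := by positivity
  have iH : Integrable (fun z => m * (auxG k r (x - z) + auxG k r (y - z)) * M) :=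
    (((iG x).add (iG y)).const_mul _).mul_const _
  calc _ ≤ ∫ z, m * (auxG k r (x - z) + auxG k r (y - z)) * M := by
        refine integral_mono_of_nonneg (.of_forall fun z => ?_) iH (.of_forall fun z => ?_)
        · refine integral_nonneg fun v => ?_
          simp only [Pi.zero_apply]; positivity
        · exact (key z).trans (mul_le_mul_of_nonneg_right (hDle z) hM0)
    _ = m * (a + a) * M := by
        rw [integral_mul_const, integral_const_mul, integral_add (iG x) (iG y), vG, vG]
    _ = _ := by rw [hM]; ring

theorem stmt_10 (k : ℕ) (hk : 1 ≤ k) (β : ℝ) (hβ : 0 < β) (hβ2 : β < min 2 (k : ℝ)) :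
    ∃ C : ℝ, 0 < C ∧
      ∀ s : ℝ, 0 ≤ s → ∀ x y : EuclideanSpace ℝ (Fin k),
        (∫ r in Set.Ioo (0:ℝ) s, ∫ z : EuclideanSpace ℝ (Fin k),
            ∫ v : EuclideanSpace ℝ (Fin k),
              ‖z - v‖ ^ (-β) * |heatKernel k r (x - z) - heatKernel k r (y - z)| *
                |heatKernel k r (x - v) - heatKernel k r (y - v)|) ≤
          C * ‖x - y‖ ^ (2 - β) := by
  obtain ⟨hb2, hbk⟩ := lt_min_iff.1 hβ2
  obtain ⟨A, hA, hin⟩ := aux_inner k hk β hβ hbk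
  refine ⟨A * (1 / (1 - β / 2) + 1 / (β / 2)), ?_, fun s _ x y => ?_⟩
  · have : 0 < 1 - β / 2 := by linarith
    positivity
  rcases eq_or_ne x y with rfl | hxy
  · have : (2:ℝ) - β ≠ 0 := by linarith
    simp [Real.zero_rpow this]
  set h := ‖x - y‖ with hh
  have h0 : 0 < h := by rw [hh, norm_pos_iff, sub_ne_zero]; exact hxy
  set g : ℝ → ℝ := fun r => if r ≤ h ^ 2 then r ^ (-β / 2) else h ^ 2 * r ^ (-1 - β / 2) with hg
  have g0 : ∀ r, 0 < r → 0 ≤ g r := fun r hr => by simp only [hg]; split_ifs <;> positivity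
  have hh2 : 0 < h ^ 2 := by positivity
  have e1 : Set.EqOn g (fun r => r ^ (-β / 2)) (Set.Ioc 0 (h ^ 2)) := fun r hr => by
    simp only [hg]; rw [if_pos hr.2]
  have e2 : Set.EqOn g (fun r => h ^ 2 * r ^ (-1 - β / 2)) (Set.Ioi (h ^ 2)) := fun r hr => by
    simp only [hg]; rw [if_neg (not_le.2 hr)]
  have i1 : IntegrableOn g (Set.Ioc 0 (h ^ 2)) := by
    refine IntegrableOn.congr_fun ?_ e1.symm measurableSet_Ioc
    rw [← intervalIntegrable_iff_integrableOn_Ioc_of_le hh2.le]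
    exact intervalIntegral.intervalIntegrable_rpow' (by linarith)
  have i2 : IntegrableOn g (Set.Ioi (h ^ 2)) := by
    refine IntegrableOn.congr_fun ?_ e2.symm measurableSet_Ioi
    exact (integrableOn_Ioi_rpow_of_lt (by linarith) hh2).const_mul _
  have hU : Set.Ioc 0 (h ^ 2) ∪ Set.Ioi (h ^ 2) = Set.Ioi (0:ℝ) := Set.Ioc_union_Ioi_eq_Ioi hh2.le
  have ig : IntegrableOn g (Set.Ioi 0) := by rw [← hU]; exact i1.union i2
  have hp : ∀ t : ℝ, (h ^ 2) ^ t = h ^ (2 * t) := fun t => by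
    rw [← Real.rpow_natCast, ← Real.rpow_mul h0.le]; norm_num
  have vg : ∫ r in Set.Ioi 0, g r = (1 / (1 - β / 2) + 1 / (β / 2)) * h ^ (2 - β) := by
    rw [← hU, setIntegral_union (Set.Ioc_disjoint_Ioi le_rfl) measurableSet_Ioi i1 i2,
      setIntegral_congr_fun measurableSet_Ioc e1, setIntegral_congr_fun measurableSet_Ioi e2,
      integral_const_mul, integral_Ioi_rpow_of_lt (by linarith) hh2,
      ← intervalIntegral.integral_of_le hh2.le, integral_rpow (Or.inl (by linarith)),
      Real.zero_rpow (by linarith), hp, hp]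
    have : h ^ (2 - β) = h ^ 2 * h ^ (2 * (-1 - β / 2 + 1)) := by
      rw [← Real.rpow_natCast h 2, ← Real.rpow_add h0]; congr 1; push_cast; ring
    rw [show 2 * (-β / 2 + 1) = 2 - β by ring, show -1 - β / 2 + 1 = -(β / 2) by ring] at *
    rw [mul_div_assoc', mul_neg, ← this, show -β / 2 + 1 = 1 - β / 2 by ring, neg_div_neg_eq]
    ring
  have hle : ∀ r, 0 < r → r ^ (-β / 2) * min 1 (h / √r) ^ 2 ≤ g r := by
    intro r hr
    have hs : 0 < √r := Real.sqrt_pos.2 hr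
    have hm0 : 0 ≤ min 1 (h / √r) := by positivity
    simp only [hg]; split_ifs
    · refine mul_le_of_le_one_right (by positivity) (pow_le_one₀ hm0 (min_le_left _ _))
    · calc _ ≤ r ^ (-β / 2) * (h / √r) ^ 2 := by gcongr; exact min_le_right _ _
        _ = _ := by
          rw [div_pow, Real.sq_sqrt hr.le, show -1 - β / 2 = -β / 2 - 1 by ring,
            Real.rpow_sub_one hr.ne']
          ring
  calc _ ≤ ∫ r in Set.Ioo 0 s, A * g r := by
        refine integral_mono_of_nonneg (.of_forall fun r => ?_)
          ((ig.mono_set Set.Ioo_subset_Ioi_self).const_mul A) ?_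
        · refine integral_nonneg fun z => integral_nonneg fun v => ?_
          simp only [Pi.zero_apply]; positivity
        · filter_upwards [ae_restrict_mem measurableSet_Ioo] with r hr
          exact (hin r hr.1 x y).trans (by gcongr; exact hle r hr.1)
    _ ≤ ∫ r in Set.Ioi 0, A * g r := by
        refine setIntegral_mono_set (ig.const_mul A) ?_ (.of_forall Set.Ioo_subset_Ioi_self)
        filter_upwards [ae_restrict_mem measurableSet_Ioi] with r hr
        exact mul_nonneg hA.le (g0 r hr)
    _ = _ := by rw [integral_const_mul, vg, mul_assoc]
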